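/- For every two-user discrete memoryless interference channel with degraded message sets (transmitter 1 informed) that has type B weak interference, i.e. I(U,X₂;Y₂) ≤ I(U,X₂;Y₁) holds for every finite-valued random variable U such that U → (X₁,X₂) → (Y₁,Y₂) is a Markov chain, the region ℛ_* is achievable: ℛ_* ⊆ C^{T₁}_{IFC}, where ℛ_* is the set of all rate pairs (R₁,R₂) such that R₁ ≤ I(X₁;Y₁|U,X₂) and R₂ ≤ I(U,X₂;Y₂) for some finite-valued auxiliary random variable U with joint distribution factoring as p(u,x₂)·p(x₁|u)·P(y₁,y₂|x₁,x₂). -/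

import Mathlib

open scoped BigOperators

noncomputable section

/-- Shannon entropy (base 2) of a finitely supported probability vector. -/
def ent {A : Type*} [Fintype A] (p : A → ℝ) : ℝ :=
  -∑ a, p a * Real.logb 2 (p a)

/-- The distribution (pushforward) of a random variable `f` on a finite
probability space with probability mass function `μ`. -/
def lawOf {Ω A : Type*} [Fintype Ω] [DecidableEq A] (μ : Ω → ℝ) (f : Ω → A) : A → ℝ :=
  fun a => ∑ ω, if f ω = a then μ ω else 0

/-- Shannon entropy (base 2) of a random variable `f` on a finite probability space. -/
def entRV {Ω A : Type*} [Fintype Ω] [Fintype A] [DecidableEq A] (μ : Ω → ℝ) (f : Ω → A) : ℝ :=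
  ent (lawOf μ f)

/-- Mutual information `I(f; g)` (base 2) on a finite probability space. -/
def miRV {Ω A B : Type*} [Fintype Ω] [Fintype A] [Fintype B] [DecidableEq A] [DecidableEq B]
    (μ : Ω → ℝ) (f : Ω → A) (g : Ω → B) : ℝ :=
  entRV μ f + entRV μ g - entRV μ (fun ω => (f ω, g ω))

/-- Conditional mutual information `I(f; g | h)` (base 2) on a finite probability space. -/
def cmiRV {Ω A B C : Type*} [Fintype Ω] [Fintype A] [Fintype B] [Fintype C]
    [DecidableEq A] [DecidableEq B] [DecidableEq C]
    (μ : Ω → ℝ) (f : Ω → A) (g : Ω → B) (h : Ω → C) : ℝ :=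
  entRV μ (fun ω => (f ω, h ω)) + entRV μ (fun ω => (g ω, h ω))
    - entRV μ (fun ω => (f ω, g ω, h ω)) - entRV μ h

/-- A two-user discrete memoryless interference channel with finite input alphabets
`X1`, `X2` and finite output alphabets `Y1`, `Y2`. -/
structure DMIFC (X1 X2 Y1 Y2 : Type) [Fintype X1] [Fintype X2] [Fintype Y1] [Fintype Y2] where
  W : X1 → X2 → Y1 → Y2 → ℝ
  nonneg : ∀ x1 x2 y1 y2, 0 ≤ W x1 x2 y1 y2
  sum_one : ∀ x1 x2, ∑ y1, ∑ y2, W x1 x2 y1 y2 = 1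

variable {X1 X2 Y1 Y2 : Type} [Fintype X1] [Fintype X2] [Fintype Y1] [Fintype Y2]
  [DecidableEq X1] [DecidableEq X2] [DecidableEq Y1] [DecidableEq Y2]

/-- Average probability that receiver 1 decodes its message incorrectly, for a given
code for the IFC with degraded message sets (transmitter 1 knows both messages),
with the messages uniform and independent and the channel used `n` times without feedback. -/
def pe1 (ch : DMIFC X1 X2 Y1 Y2) (n M1 M2 : ℕ)
    (f1 : Fin M1 → Fin M2 → Fin n → X1) (f2 : Fin M2 → Fin n → X2)
    (g1 : (Fin n → Y1) → Fin M1) : ℝ :=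
  (1 / (M1 * M2) : ℝ) * ∑ w1 : Fin M1, ∑ w2 : Fin M2, ∑ y1 : Fin n → Y1, ∑ y2 : Fin n → Y2,
    (∏ i, ch.W (f1 w1 w2 i) (f2 w2 i) (y1 i) (y2 i)) * (if g1 y1 = w1 then 0 else 1)

/-- Average probability that receiver 2 decodes its message incorrectly. -/
def pe2 (ch : DMIFC X1 X2 Y1 Y2) (n M1 M2 : ℕ)
    (f1 : Fin M1 → Fin M2 → Fin n → X1) (f2 : Fin M2 → Fin n → X2)
    (g2 : (Fin n → Y2) → Fin M2) : ℝ :=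
  (1 / (M1 * M2) : ℝ) * ∑ w1 : Fin M1, ∑ w2 : Fin M2, ∑ y1 : Fin n → Y1, ∑ y2 : Fin n → Y2,
    (∏ i, ch.W (f1 w1 w2 i) (f2 w2 i) (y1 i) (y2 i)) * (if g2 y2 = w2 then 0 else 1)

/-- A rate pair `(R1, R2)` is achievable for the IFC with degraded message sets
(transmitter 1 informed) if there are codes of arbitrarily small error probability
whose rates are arbitrarily close to `(R1, R2)`. -/
def AchievableT1 (ch : DMIFC X1 X2 Y1 Y2) (R1 R2 : ℝ) : Prop :=
  ∀ ε : ℝ, 0 < ε → ∃ (n M1 M2 : ℕ) (f1 : Fin M1 → Fin M2 → Fin n → X1)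
    (f2 : Fin M2 → Fin n → X2) (g1 : (Fin n → Y1) → Fin M1) (g2 : (Fin n → Y2) → Fin M2),
    0 < n ∧ 0 < M1 ∧ 0 < M2 ∧
    R1 - ε ≤ Real.logb 2 M1 / n ∧ R2 - ε ≤ Real.logb 2 M2 / n ∧
    pe1 ch n M1 M2 f1 f2 g1 ≤ ε ∧ pe2 ch n M1 M2 f1 f2 g2 ≤ ε

/-- The capacity region `C^{T₁}_{IFC}` of the IFC with degraded message sets
(transmitter 1 knows both messages): the closure of the set of achievable rate pairs. -/
def CapacityT1 (ch : DMIFC X1 X2 Y1 Y2) : Set (ℝ × ℝ) :=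
  closure {R : ℝ × ℝ | AchievableT1 ch R.1 R.2}

/-- The joint distribution on `(U, X₁, X₂, Y₁, Y₂)` obtained from an arbitrary joint
distribution `q` on `(U, X₁, X₂)` by passing `(X₁, X₂)` through the channel; this is
exactly the condition that `U → (X₁,X₂) → (Y₁,Y₂)` is a Markov chain. -/
def jointMarkov (ch : DMIFC X1 X2 Y1 Y2) (nU : ℕ) (q : Fin nU × X1 × X2 → ℝ) :
    Fin nU × X1 × X2 × Y1 × Y2 → ℝ :=
  fun p => q (p.1, p.2.1, p.2.2.1) * ch.W p.2.1 p.2.2.1 p.2.2.2.1 p.2.2.2.2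

/-- Type B weak interference: `I(U, X₂; Y₂) ≤ I(U, X₂; Y₁)` for every finite-valued
random variable `U` such that `U → (X₁,X₂) → (Y₁,Y₂)` is a Markov chain. -/
def TypeB (ch : DMIFC X1 X2 Y1 Y2) : Prop :=
  ∀ (nU : ℕ) (q : Fin nU × X1 × X2 → ℝ),
    (∀ p, 0 ≤ q p) → (∑ p, q p = 1) →
    miRV (jointMarkov ch nU q) (fun p => (p.1, p.2.2.1)) (fun p => p.2.2.2.2)
      ≤ miRV (jointMarkov ch nU q) (fun p => (p.1, p.2.2.1)) (fun p => p.2.2.2.1)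

/-- The joint distribution on `(U, X₁, X₂, Y₁, Y₂)` factoring as
`p(u,x₂) p(x₁|u) P(y₁,y₂|x₁,x₂)`. -/
def jointStar (ch : DMIFC X1 X2 Y1 Y2) (nU : ℕ)
    (pUX2 : Fin nU → X2 → ℝ) (pX1 : Fin nU → X1 → ℝ) :
    Fin nU × X1 × X2 × Y1 × Y2 → ℝ :=
  fun p => pUX2 p.1 p.2.2.1 * pX1 p.1 p.2.1 * ch.W p.2.1 p.2.2.1 p.2.2.2.1 p.2.2.2.2

/-- The region `ℛ_*`: all rate pairs `(R₁, R₂)` with `R₁ ≤ I(X₁; Y₁ | U, X₂)` and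
`R₂ ≤ I(U, X₂; Y₂)` for some finite-valued auxiliary random variable `U` whose joint
distribution with the inputs and outputs factors as `p(u,x₂) p(x₁|u) P(y₁,y₂|x₁,x₂)`. -/
def Rstar (ch : DMIFC X1 X2 Y1 Y2) : Set (ℝ × ℝ) :=
  {R | ∃ (nU : ℕ) (pUX2 : Fin nU → X2 → ℝ) (pX1 : Fin nU → X1 → ℝ),
    (∀ u x2, 0 ≤ pUX2 u x2) ∧ (∑ u, ∑ x2, pUX2 u x2) = 1 ∧
    (∀ u x1, 0 ≤ pX1 u x1) ∧ (∀ u, ∑ x1, pX1 u x1 = 1) ∧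
    R.1 ≤ cmiRV (jointStar ch nU pUX2 pX1)
            (fun p => p.2.1) (fun p => p.2.2.2.1) (fun p => (p.1, p.2.2.1)) ∧
    R.2 ≤ miRV (jointStar ch nU pUX2 pX1)
            (fun p => (p.1, p.2.2.1)) (fun p => p.2.2.2.2)}


lemma aux_prodSum {ι α : Type*} [Fintype ι] [DecidableEq ι] [Fintype α] (g : ι → α → ℝ) :
    ∑ c : ι → α, ∏ i, g i (c i) = ∏ i, ∑ a, g i a := by
  rw [Finset.prod_univ_sum, Fintype.piFinset_univ]

lemma aux_prodE1 {ι α : Type*} [Fintype ι] [DecidableEq ι] [Fintype α] (κ : α → ℝ)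
    (h1 : ∑ a, κ a = 1) (j : ι) (F : α → ℝ) :
    ∑ c : ι → α, (∏ i, κ (c i)) * F (c j) = ∑ a, κ a * F a := by
  have h := aux_prodSum (fun (i : ι) (a : α) => κ a * (if i = j then F a else 1))
  have hl : ∀ c : ι → α, ∏ i, (κ (c i) * (if i = j then F (c i) else 1))
      = (∏ i, κ (c i)) * F (c j) := by
    intro c
    rw [Finset.prod_mul_distrib]
    simp
  have hr : ∀ i : ι, ∑ a, κ a * (if i = j then F a else 1)
      = if i = j then ∑ a, κ a * F a else 1 := by
    intro i
    split_ifs <;> simp [h1]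
  simp only [hl, hr] at h
  simpa using h

lemma aux_prodE2' {ι α : Type*} [Fintype ι] [DecidableEq ι] [Fintype α] (κ : α → ℝ)
    (h1 : ∑ a, κ a = 1) (j k : ι) (hjk : j ≠ k) (F G : α → ℝ) :
    ∑ c : ι → α, (∏ i, κ (c i)) * (F (c j) * G (c k)) =
      (∑ a, κ a * F a) * (∑ a, κ a * G a) := by
  have h := aux_prodSum (fun (i : ι) (a : α) =>
    κ a * ((if i = j then F a else 1) * (if i = k then G a else 1)))
  have hl : ∀ c : ι → α, ∏ i, (κ (c i) *
      ((if i = j then F (c i) else 1) * (if i = k then G (c i) else 1)))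
      = (∏ i, κ (c i)) * (F (c j) * G (c k)) := by
    intro c
    rw [Finset.prod_mul_distrib, Finset.prod_mul_distrib]
    simp
  have hr : ∀ i : ι, ∑ a, κ a * ((if i = j then F a else 1) * (if i = k then G a else 1))
      = (if i = j then ∑ a, κ a * F a else 1) * (if i = k then ∑ a, κ a * G a else 1) := by
    intro i
    by_cases hj : i = j
    · have : i ≠ k := fun h => hjk (hj.symm.trans h)
      simp [hj, hjk]
    · by_cases hk : i = k <;> simp [hj, hk, h1, hjk.symm]
  simp only [hl, hr, Finset.prod_mul_distrib] at h
  simpa using h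

lemma aux_prodE2 {ι α : Type*} [Fintype ι] [DecidableEq ι] [Fintype α] (κ : α → ℝ)
    (h1 : ∑ a, κ a = 1) (j k : ι) (hjk : j ≠ k) (F : α → α → ℝ) :
    ∑ c : ι → α, (∏ i, κ (c i)) * F (c j) (c k) = ∑ a, ∑ b, κ a * κ b * F a b := by
  classical
  have e : ∀ c : ι → α, (∏ i, κ (c i)) * F (c j) (c k)
      = ∑ a, (∏ i, κ (c i)) * ((if c j = a then 1 else 0) * F a (c k)) := by
    intro c
    simp
  simp only [e]
  rw [Finset.sum_comm]
  refine Finset.sum_congr rfl fun a _ => ?_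
  have := aux_prodE2' κ h1 j k hjk (fun b => if b = a then 1 else 0) (F a)
  rw [this]
  simp [Finset.mul_sum, mul_assoc]

lemma aux_sum_prod_one {ι α : Type*} [Fintype ι] [DecidableEq ι] [Fintype α] (g : ι → α → ℝ)
    (h : ∀ i, ∑ a, g i a = 1) : ∑ c : ι → α, ∏ i, g i (c i) = 1 := by
  rw [aux_prodSum]; simp [h]

/-- averaging argument -/
lemma aux_exists_le {α : Type*} [Fintype α] (p : α → ℝ) (hp : ∀ a, 0 ≤ p a) (h1 : ∑ a, p a = 1)
    (f : α → ℝ) (T : ℝ) (h : ∑ a, p a * f a ≤ T) : ∃ a, f a ≤ T := by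
  by_contra hc
  push Not at hc
  have hne : ∃ a, 0 < p a := by
    by_contra h0
    push Not at h0
    have : ∑ a, p a ≤ 0 := Finset.sum_nonpos fun a _ => h0 a
    linarith
  obtain ⟨a0, ha0⟩ := hne
  have : ∑ a, p a * T < ∑ a, p a * f a := by
    refine Finset.sum_lt_sum (fun a _ => mul_le_mul_of_nonneg_left (hc a).le (hp a)) ?_
    exact ⟨a0, Finset.mem_univ _, mul_lt_mul_of_pos_left (hc a0) ha0⟩
  rw [← Finset.sum_mul, h1, one_mul] at this
  linarith

/-- weak law of large numbers (Chebyshev) -/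
lemma aux_wlln {Ω : Type*} [Fintype Ω] (μ : Ω → ℝ) (hμ : ∀ ω, 0 ≤ μ ω) (h1 : ∑ ω, μ ω = 1)
    (a b : Ω → ℝ) (ha : ∀ ω, 0 < μ ω → 0 < a ω) (hb : ∀ ω, 0 < μ ω → 0 < b ω)
    (I : ℝ) (hI : I = ∑ ω, μ ω * Real.logb 2 (a ω / b ω)) :
    ∃ S : ℝ, 0 ≤ S ∧ ∀ (n : ℕ) (δ : ℝ), 0 < n → 0 < δ →
      ∑ w : Fin n → Ω, (∏ i, μ (w i)) *
        (if (2:ℝ) ^ ((n:ℝ) * (I - δ)) * (∏ i, b (w i)) ≤ ∏ i, a (w i) then 0 else 1)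
        ≤ S / (n * δ ^ 2) := by
  set Z : Ω → ℝ := fun ω => Real.logb 2 (a ω / b ω) - I with hZ
  have hZ0 : ∑ ω, μ ω * Z ω = 0 := by
    simp only [hZ, mul_sub, Finset.sum_sub_distrib, ← Finset.sum_mul, h1]
    rw [← hI]; ring
  refine ⟨∑ ω, μ ω * Z ω ^ 2, Finset.sum_nonneg fun ω _ => mul_nonneg (hμ ω) (sq_nonneg _), ?_⟩
  intro n δ hn hδ
  have hn' : (0:ℝ) < n := by exact_mod_cast hn
  have hvar : ∑ w : Fin n → Ω, (∏ i, μ (w i)) * (∑ i, Z (w i)) ^ 2 = n * ∑ ω, μ ω * Z ω ^ 2 := by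
    have e : ∀ w : Fin n → Ω, (∏ i, μ (w i)) * (∑ i, Z (w i)) ^ 2
        = ∑ j, ∑ k, (∏ i, μ (w i)) * (Z (w j) * Z (w k)) := by
      intro w
      rw [sq, Finset.sum_mul_sum, Finset.mul_sum]
      simp [Finset.mul_sum]
    simp only [e]
    rw [Finset.sum_comm]
    have : ∀ j : Fin n, ∑ w : Fin n → Ω, ∑ k, (∏ i, μ (w i)) * (Z (w j) * Z (w k))
        = ∑ ω, μ ω * Z ω ^ 2 := by
      intro j
      rw [Finset.sum_comm, Finset.sum_eq_single j]
      · have := aux_prodE1 μ h1 j (fun ω => Z ω * Z ω)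
        rw [this]
        simp [sq]
      · intro k _ hk
        rw [aux_prodE2' μ h1 j k hk.symm Z Z, hZ0]; simp
      · simp
    simp [this]
  have hpt : ∀ w : Fin n → Ω, (∏ i, μ (w i)) *
        (if (2:ℝ) ^ ((n:ℝ) * (I - δ)) * (∏ i, b (w i)) ≤ ∏ i, a (w i) then 0 else 1)
        ≤ (∏ i, μ (w i)) * (∑ i, Z (w i)) ^ 2 * (1 / (n * δ) ^ 2) := by
    intro w
    have hnn : 0 ≤ ∏ i, μ (w i) := Finset.prod_nonneg fun i _ => hμ _
    rcases hnn.eq_or_lt with h0 | hpos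
    · simp [← h0]
    have hmu : ∀ i, 0 < μ (w i) := by
      intro i
      refine lt_of_le_of_ne (hμ _) fun h => ?_
      have := Finset.prod_eq_zero (f := fun i => μ (w i)) (Finset.mem_univ i) h.symm
      linarith
    split_ifs with hc
    · rw [mul_zero]; positivity
    · rw [mul_assoc]
      refine mul_le_mul_of_nonneg_left ?_ hnn
      push Not at hc
      have hA : 0 < ∏ i, a (w i) := Finset.prod_pos fun i _ => ha _ (hmu i)
      have hB : 0 < ∏ i, b (w i) := Finset.prod_pos fun i _ => hb _ (hmu i)
      have hlog := Real.logb_lt_logb (b := 2) (by norm_num) hA hc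
      rw [Real.logb_mul (by positivity) hB.ne', Real.logb_rpow (by norm_num) (by norm_num)] at hlog
      rw [Real.logb_prod _ _ (fun i _ => (ha _ (hmu i)).ne'),
        Real.logb_prod _ _ (fun i _ => (hb _ (hmu i)).ne')] at hlog
      have hZs : ∑ i, Z (w i) = ∑ i, Real.logb 2 (a (w i)) - ∑ i, Real.logb 2 (b (w i)) - n * I := by
        simp only [hZ, Finset.sum_sub_distrib]
        simp only [Real.logb_div (ha _ (hmu _)).ne' (hb _ (hmu _)).ne', Finset.sum_sub_distrib]
        simp
      have hlt : ∑ i, Z (w i) < - (n * δ) := by rw [hZs]; nlinarith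
      have hnd : 0 < n * δ := by positivity
      rw [mul_one_div, le_div_iff₀ (by positivity), one_mul]
      nlinarith
  refine (Finset.sum_le_sum fun w _ => hpt w).trans ?_
  rw [← Finset.sum_mul, hvar]
  apply le_of_eq
  field_simp

lemma aux_cluster1 {V X : Type*} [Fintype V] [Fintype X] (P : V → ℝ) (Q : V → X → ℝ)
    (hQ1 : ∀ v, ∑ x, Q v x = 1) (M : ℕ) (l : Fin M) (F : V → X → ℝ) :
    ∑ a : V × (Fin M → X), (P a.1 * ∏ l, Q a.1 (a.2 l)) * F a.1 (a.2 l)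
      = ∑ v, ∑ x, P v * Q v x * F v x := by
  rw [Fintype.sum_prod_type]
  refine Finset.sum_congr rfl fun v _ => ?_
  simp only [mul_assoc]
  rw [← Finset.mul_sum, ← Finset.mul_sum]
  rw [aux_prodE1 (Q v) (hQ1 v) l (F v)]

lemma aux_cluster0 {V X : Type*} [Fintype V] [Fintype X] (P : V → ℝ) (Q : V → X → ℝ)
    (hQ1 : ∀ v, ∑ x, Q v x = 1) (M : ℕ) (F : V → ℝ) :
    ∑ a : V × (Fin M → X), (P a.1 * ∏ l, Q a.1 (a.2 l)) * F a.1
      = ∑ v, P v * F v := by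
  rw [Fintype.sum_prod_type]
  refine Finset.sum_congr rfl fun v _ => ?_
  dsimp only
  rw [← Finset.sum_mul, ← Finset.mul_sum, aux_sum_prod_one (fun _ => Q v) (fun _ => hQ1 v), mul_one]

lemma aux_cluster2 {V X : Type*} [Fintype V] [Fintype X] (P : V → ℝ) (Q : V → X → ℝ)
    (hQ1 : ∀ v, ∑ x, Q v x = 1) (M : ℕ) (l l' : Fin M) (hl : l ≠ l') (F : V → X → X → ℝ) :
    ∑ a : V × (Fin M → X), (P a.1 * ∏ l, Q a.1 (a.2 l)) * F a.1 (a.2 l) (a.2 l')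
      = ∑ v, P v * ∑ x, ∑ x', Q v x * Q v x' * F v x x' := by
  rw [Fintype.sum_prod_type]
  refine Finset.sum_congr rfl fun v _ => ?_
  simp only [mul_assoc (P v)]
  rw [← Finset.mul_sum]
  rw [aux_prodE2 (Q v) (hQ1 v) l l' hl (F v)]

lemma aux_avg {V X Y : Type*} [Fintype V] [Fintype X] [Fintype Y] (P : V → ℝ) (Q : V → X → ℝ)
    (K : V → X → Y → ℝ) (hP1 : ∑ v, P v = 1) (hQ1 : ∀ v, ∑ x, Q v x = 1)
    (D0 : V → X → Y → ℝ) (D1 : V → Y → ℝ) (D2 : V → X → Y → ℝ) (M1 M2 : ℕ)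
    (w1 : Fin M1) (w2 : Fin M2) :
    ∑ c : Fin M2 → V × (Fin M1 → X), (∏ k, (P (c k).1 * ∏ l, Q (c k).1 ((c k).2 l))) *
      ∑ y, K (c w2).1 ((c w2).2 w1) y * (D0 (c w2).1 ((c w2).2 w1) y
        + ∑ k ∈ Finset.univ.erase w2, D1 (c k).1 y
        + ∑ l ∈ Finset.univ.erase w1, D2 (c w2).1 ((c w2).2 l) y)
    = ∑ v, ∑ x, P v * Q v x * ∑ y, K v x y * D0 v x y
      + ((M2:ℝ) - 1) * ∑ v, ∑ x, P v * Q v x * ∑ v', P v' * ∑ y, K v x y * D1 v' y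
      + ((M1:ℝ) - 1) * ∑ v, P v * ∑ x, ∑ x', Q v x * Q v x' * ∑ y, K v x y * D2 v x' y := by
  set κ : V × (Fin M1 → X) → ℝ := fun a => P a.1 * ∏ l, Q a.1 (a.2 l) with hκ
  have hκ1 : ∑ a, κ a = 1 := by
    have := aux_cluster0 P Q hQ1 M1 (fun _ => 1)
    simpa [hκ, hP1] using this
  have e : ∀ c : Fin M2 → V × (Fin M1 → X),
      ∑ y, K (c w2).1 ((c w2).2 w1) y * (D0 (c w2).1 ((c w2).2 w1) y
        + ∑ k ∈ Finset.univ.erase w2, D1 (c k).1 y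
        + ∑ l ∈ Finset.univ.erase w1, D2 (c w2).1 ((c w2).2 l) y)
      = ∑ y, K (c w2).1 ((c w2).2 w1) y * D0 (c w2).1 ((c w2).2 w1) y
        + ∑ k ∈ Finset.univ.erase w2, ∑ y, K (c w2).1 ((c w2).2 w1) y * D1 (c k).1 y
        + ∑ l ∈ Finset.univ.erase w1,
            ∑ y, K (c w2).1 ((c w2).2 w1) y * D2 (c w2).1 ((c w2).2 l) y := by
    intro c
    simp only [mul_add, Finset.sum_add_distrib, Finset.mul_sum]
    congr 1
    · congr 1
      rw [Finset.sum_comm]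
    · rw [Finset.sum_comm]
  simp only [e]
  simp only [mul_add, Finset.sum_add_distrib]
  congr 1
  · congr 1
    · rw [aux_prodE1 κ hκ1 w2 (fun a => ∑ y, K a.1 (a.2 w1) y * D0 a.1 (a.2 w1) y)]
      exact aux_cluster1 P Q hQ1 M1 w1 (fun v x => ∑ y, K v x y * D0 v x y)
    · simp only [Finset.mul_sum (Finset.univ.erase w2)]
      rw [Finset.sum_comm]
      have : ∀ k ∈ Finset.univ.erase w2, ∑ c : Fin M2 → V × (Fin M1 → X), (∏ k, κ (c k)) *
          (∑ y, K (c w2).1 ((c w2).2 w1) y * D1 (c k).1 y)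
          = ∑ v, ∑ x, P v * Q v x * ∑ v', P v' * ∑ y, K v x y * D1 v' y := by
        intro k hk
        have hk' : w2 ≠ k := (Finset.ne_of_mem_erase hk).symm
        rw [aux_prodE2 κ hκ1 w2 k hk' (fun a b => ∑ y, K a.1 (a.2 w1) y * D1 b.1 y)]
        simp only [mul_assoc, ← Finset.mul_sum]
        have h2 : ∀ a : V × (Fin M1 → X), ∑ b, κ b * ∑ y, K a.1 (a.2 w1) y * D1 b.1 y
            = ∑ v', P v' * ∑ y, K a.1 (a.2 w1) y * D1 v' y := fun a =>
          aux_cluster0 P Q hQ1 M1 (fun v' => ∑ y, K a.1 (a.2 w1) y * D1 v' y)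
        simp only [h2]
        have := aux_cluster1 P Q hQ1 M1 w1 (fun v x => ∑ v', P v' * ∑ y, K v x y * D1 v' y)
        rw [this]
        simp only [mul_assoc, ← Finset.mul_sum]
      rw [Finset.sum_congr rfl this]
      have hM : 1 ≤ M2 := Nat.succ_le_of_lt (Fin.pos w2)
      simp [Finset.card_erase_of_mem, Nat.cast_sub hM]
  · simp only [Finset.mul_sum (Finset.univ.erase w1)]
    rw [Finset.sum_comm]
    have : ∀ l ∈ Finset.univ.erase w1, ∑ c : Fin M2 → V × (Fin M1 → X), (∏ k, κ (c k)) *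
          (∑ y, K (c w2).1 ((c w2).2 w1) y * D2 (c w2).1 ((c w2).2 l) y)
          = ∑ v, P v * ∑ x, ∑ x', Q v x * Q v x' * ∑ y, K v x y * D2 v x' y := by
      intro l hl
      have hl' : w1 ≠ l := (Finset.ne_of_mem_erase hl).symm
      rw [aux_prodE1 κ hκ1 w2 (fun a => ∑ y, K a.1 (a.2 w1) y * D2 a.1 (a.2 l) y)]
      exact aux_cluster2 P Q hQ1 M1 w1 l hl' (fun v x x' => ∑ y, K v x y * D2 v x' y)
    rw [Finset.sum_congr rfl this]
    have hM : 1 ≤ M1 := Nat.succ_le_of_lt (Fin.pos w1)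
    simp [Finset.card_erase_of_mem, Nat.cast_sub hM]

/-- existence of a codebook from average -/
lemma aux_exists_code {V X Y : Type*} [Fintype V] [Fintype X] [Fintype Y]
    (P : V → ℝ) (Q : V → X → ℝ)
    (K : V → X → Y → ℝ) (hP : ∀ v, 0 ≤ P v) (hP1 : ∑ v, P v = 1)
    (hQ : ∀ v x, 0 ≤ Q v x) (hQ1 : ∀ v, ∑ x, Q v x = 1)
    (D0 : V → X → Y → ℝ) (D1 : V → Y → ℝ) (D2 : V → X → Y → ℝ) (M1 M2 : ℕ)
    (hM1 : 0 < M1) (hM2 : 0 < M2) :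
    ∃ (v : Fin M2 → V) (x : Fin M1 → Fin M2 → X),
     (1 / (M1 * M2) : ℝ) * ∑ w1 : Fin M1, ∑ w2 : Fin M2,
      ∑ y, K (v w2) (x w1 w2) y * (D0 (v w2) (x w1 w2) y
        + ∑ k ∈ Finset.univ.erase w2, D1 (v k) y
        + ∑ l ∈ Finset.univ.erase w1, D2 (v w2) (x l w2) y)
    ≤ ∑ v, ∑ x, P v * Q v x * ∑ y, K v x y * D0 v x y
      + ((M2:ℝ) - 1) * ∑ v, ∑ x, P v * Q v x * ∑ v', P v' * ∑ y, K v x y * D1 v' y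
      + ((M1:ℝ) - 1) * ∑ v, P v * ∑ x, ∑ x', Q v x * Q v x' * ∑ y, K v x y * D2 v x' y := by
  have h1 : ∑ a : V × (Fin M1 → X), (P a.1 * ∏ l, Q a.1 (a.2 l)) = 1 := by
    have := aux_cluster0 P Q hQ1 M1 (fun _ => 1)
    simpa [hP1] using this
  obtain ⟨c, hc⟩ := aux_exists_le
    (fun c : Fin M2 → V × (Fin M1 → X) => ∏ k, (P (c k).1 * ∏ l, Q (c k).1 ((c k).2 l)))
    (fun c => Finset.prod_nonneg fun k _ => mul_nonneg (hP _) (Finset.prod_nonneg fun l _ => hQ _ _))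
    (aux_sum_prod_one (fun (_ : Fin M2) (a : V × (Fin M1 → X)) => P a.1 * ∏ l, Q a.1 (a.2 l))
      (fun _ => h1))
    (fun c => (1 / (M1 * M2) : ℝ) * ∑ w1 : Fin M1, ∑ w2 : Fin M2,
      ∑ y, K (c w2).1 ((c w2).2 w1) y * (D0 (c w2).1 ((c w2).2 w1) y
        + ∑ k ∈ Finset.univ.erase w2, D1 (c k).1 y
        + ∑ l ∈ Finset.univ.erase w1, D2 (c w2).1 ((c w2).2 l) y))
    (∑ v, ∑ x, P v * Q v x * ∑ y, K v x y * D0 v x y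
      + ((M2:ℝ) - 1) * ∑ v, ∑ x, P v * Q v x * ∑ v', P v' * ∑ y, K v x y * D1 v' y
      + ((M1:ℝ) - 1) * ∑ v, P v * ∑ x, ∑ x', Q v x * Q v x' * ∑ y, K v x y * D2 v x' y) (by
      have hav := aux_avg P Q K hP1 hQ1 D0 D1 D2 M1 M2
      simp only [mul_left_comm _ (1 / ((M1:ℝ) * M2))]
      rw [← Finset.mul_sum]
      simp only [Finset.mul_sum (Finset.univ : Finset (Fin M1)),
        Finset.mul_sum (Finset.univ : Finset (Fin M2))]
      rw [Finset.sum_comm]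
      have : ∀ w1 : Fin M1, ∑ c : Fin M2 → V × (Fin M1 → X), ∑ w2 : Fin M2,
        (∏ k, (P (c k).1 * ∏ l, Q (c k).1 ((c k).2 l))) *
      ∑ y, K (c w2).1 ((c w2).2 w1) y * (D0 (c w2).1 ((c w2).2 w1) y
        + ∑ k ∈ Finset.univ.erase w2, D1 (c k).1 y
        + ∑ l ∈ Finset.univ.erase w1, D2 (c w2).1 ((c w2).2 l) y) = M2 * (∑ v, ∑ x, P v * Q v x * ∑ y, K v x y * D0 v x y
      + ((M2:ℝ) - 1) * ∑ v, ∑ x, P v * Q v x * ∑ v', P v' * ∑ y, K v x y * D1 v' y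
      + ((M1:ℝ) - 1) * ∑ v, P v * ∑ x, ∑ x', Q v x * Q v x' * ∑ y, K v x y * D2 v x' y) := by
        intro w1
        rw [Finset.sum_comm]
        simp only [hav]
        simp only [Finset.sum_const, Finset.card_univ, Fintype.card_fin, nsmul_eq_mul]
      rw [Finset.sum_congr rfl fun w1 _ => this w1]
      apply le_of_eq
      simp only [Finset.sum_const, Finset.card_univ, Fintype.card_fin, nsmul_eq_mul]
      have h1' : (0:ℝ) < M1 := by exact_mod_cast hM1
      have h2' : (0:ℝ) < M2 := by exact_mod_cast hM2
      field_simp)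
  exact ⟨fun k => (c k).1, fun l k => (c k).2 l, hc⟩

lemma aux_change1 {V X Z : Type*} [Fintype V] [Fintype X] [Fintype Z]
    (P : V → ℝ) (Q : V → X → ℝ) (K : V → X → Z → ℝ)
    (hP : ∀ v, 0 ≤ P v) (hP1 : ∑ v, P v = 1)
    (hQ1 : ∀ v, ∑ x, Q v x = 1) (hK1 : ∀ v x, ∑ z, K v x z = 1)
    (hQ : ∀ v x, 0 ≤ Q v x) (hK : ∀ v x z, 0 ≤ K v x z)
    (WV : V → Z → ℝ) (hWV : ∀ v z, WV v z = ∑ x, Q v x * K v x z)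
    (PZ : Z → ℝ) (hPZ : ∀ z, PZ z = ∑ v, P v * WV v z) (c : ℝ) (hc : 0 < c) :
    ∑ v, ∑ x, P v * Q v x * ∑ v', P v' * ∑ z, K v x z * (if c * PZ z ≤ WV v' z then 1 else 0)
      ≤ 1 / c := by
  have e : ∀ J : V → Z → ℝ, ∑ v, ∑ x, P v * Q v x * ∑ v', P v' * ∑ z, K v x z * J v' z
      = ∑ v', P v' * ∑ z, PZ z * J v' z := by
    intro J
    simp only [hPZ, hWV, Finset.mul_sum, Finset.sum_mul]
    have : ∀ f : V → X → V → Z → ℝ,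
        ∑ v, ∑ x, ∑ v', ∑ z, f v x v' z = ∑ v', ∑ z, ∑ v, ∑ x, f v x v' z := by
      intro f
      calc _ = ∑ v, ∑ v', ∑ x, ∑ z, f v x v' z :=
            Finset.sum_congr rfl fun _ _ => Finset.sum_comm
        _ = ∑ v', ∑ v, ∑ x, ∑ z, f v x v' z := Finset.sum_comm
        _ = ∑ v', ∑ v, ∑ z, ∑ x, f v x v' z :=
            Finset.sum_congr rfl fun _ _ => Finset.sum_congr rfl fun _ _ => Finset.sum_comm
        _ = _ := Finset.sum_congr rfl fun _ _ => Finset.sum_comm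
    rw [this]
    refine Finset.sum_congr rfl fun v' _ => ?_
    refine Finset.sum_congr rfl fun z _ => ?_
    refine Finset.sum_congr rfl fun v _ => ?_
    refine Finset.sum_congr rfl fun x _ => ?_
    ring
  rw [e (fun v' z => if c * PZ z ≤ WV v' z then 1 else 0)]
  have hWVn : ∀ v z, 0 ≤ WV v z := fun v z => by
    rw [hWV]; exact Finset.sum_nonneg fun x _ => mul_nonneg (hQ _ _) (hK _ _ _)
  have hWV1 : ∀ v, ∑ z, WV v z = 1 := fun v => by
    simp only [hWV]; rw [Finset.sum_comm]; simp [← Finset.mul_sum, hK1, hQ1]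
  calc _ ≤ ∑ v', P v' * ∑ z, WV v' z * (1 / c) := by
        refine Finset.sum_le_sum fun v' _ => mul_le_mul_of_nonneg_left ?_ (hP v')
        refine Finset.sum_le_sum fun z _ => ?_
        split_ifs with h
        · rw [mul_one, mul_one_div, le_div_iff₀ hc]; linarith
        · rw [mul_zero]; exact mul_nonneg (hWVn _ _) (by positivity)
    _ = 1 / c := by simp only [← Finset.sum_mul, hWV1, one_mul, hP1]

lemma aux_change2 {V X Z : Type*} [Fintype V] [Fintype X] [Fintype Z]
    (P : V → ℝ) (Q : V → X → ℝ) (K : V → X → Z → ℝ)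
    (hP : ∀ v, 0 ≤ P v) (hP1 : ∑ v, P v = 1)
    (hQ1 : ∀ v, ∑ x, Q v x = 1) (hK1 : ∀ v x, ∑ z, K v x z = 1)
    (hQ : ∀ v x, 0 ≤ Q v x) (hK : ∀ v x z, 0 ≤ K v x z)
    (WV : V → Z → ℝ) (hWV : ∀ v z, WV v z = ∑ x, Q v x * K v x z) (c : ℝ) (hc : 0 < c) :
    ∑ v, P v * ∑ x, ∑ x', Q v x * Q v x' * ∑ z, K v x z * (if c * WV v z ≤ K v x' z then 1 else 0)
      ≤ 1 / c := by
  have e : ∀ v, ∑ x, ∑ x', Q v x * Q v x' * ∑ z, K v x z *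
      (if c * WV v z ≤ K v x' z then (1:ℝ) else 0)
      = ∑ x', Q v x' * ∑ z, WV v z * (if c * WV v z ≤ K v x' z then (1:ℝ) else 0) := by
    intro v
    rw [Finset.sum_comm]
    refine Finset.sum_congr rfl fun x' _ => ?_
    simp only [Finset.mul_sum]
    rw [Finset.sum_comm]
    refine Finset.sum_congr rfl fun z _ => ?_
    conv_rhs => rw [mul_comm, mul_assoc]; lhs; rw [hWV]
    rw [Finset.sum_mul]
    refine Finset.sum_congr rfl fun x _ => ?_
    ring
  simp only [e]
  calc _ ≤ ∑ v, P v * ∑ x', Q v x' * ∑ z, K v x' z * (1 / c) := by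
        refine Finset.sum_le_sum fun v _ => mul_le_mul_of_nonneg_left ?_ (hP v)
        refine Finset.sum_le_sum fun x' _ => mul_le_mul_of_nonneg_left ?_ (hQ v x')
        refine Finset.sum_le_sum fun z _ => ?_
        split_ifs with h
        · rw [mul_one, mul_one_div, le_div_iff₀ hc]; linarith
        · rw [mul_zero]; exact mul_nonneg (hK _ _ _) (by positivity)
    _ = 1 / c := by simp only [← Finset.sum_mul, hK1, hQ1, one_mul, hP1]

lemma aux_le_sum_ind {M : ℕ} (A : Fin M → Prop) [DecidablePred A] (w k : Fin M) (hk : k ≠ w)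
    (hA : A k) : (1:ℝ) ≤ ∑ k ∈ Finset.univ.erase w, (if A k then (1:ℝ) else 0) := by
  have := Finset.single_le_sum (s := Finset.univ.erase w) (f := fun k => if A k then (1:ℝ) else 0)
    (fun i _ => by split_ifs <;> norm_num)
    (Finset.mem_erase.2 ⟨hk, Finset.mem_univ k⟩)
  simpa [hA] using this

lemma aux_sum_ind_nonneg {M : ℕ} (A : Fin M → Prop) [DecidablePred A] (s : Finset (Fin M)) :
    (0:ℝ) ≤ ∑ k ∈ s, (if A k then (1:ℝ) else 0) :=
  Finset.sum_nonneg fun i _ => by split_ifs <;> norm_num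

lemma aux_dec1 {M1 M2 : ℕ} (hM1 : 0 < M1) (A : Fin M2 → Prop) [DecidablePred A]
    (B : Fin M2 → Fin M1 → Prop) [∀ k, DecidablePred (B k)] :
    ∃ g : Fin M1, ∀ w1 w2, (if g = w1 then (0:ℝ) else 1) ≤
      (if A w2 then 0 else 1) + (if B w2 w1 then 0 else 1)
      + ∑ k ∈ Finset.univ.erase w2, (if A k then (1:ℝ) else 0)
      + ∑ l ∈ Finset.univ.erase w1, (if B w2 l then (1:ℝ) else 0) := by
  by_cases h : ∃ p : Fin M1 × Fin M2, A p.2 ∧ B p.2 p.1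
  · obtain ⟨⟨a, b⟩, hA, hB⟩ := h
    refine ⟨a, fun w1 w2 => ?_⟩
    have n1 := aux_sum_ind_nonneg A (Finset.univ.erase w2)
    have n2 := aux_sum_ind_nonneg (B w2) (Finset.univ.erase w1)
    have p1 : (0:ℝ) ≤ (if A w2 then 0 else 1) := by split_ifs <;> norm_num
    have p2 : (0:ℝ) ≤ (if B w2 w1 then 0 else 1) := by split_ifs <;> norm_num
    by_cases ha : a = w1
    · rw [if_pos ha]; linarith
    · rw [if_neg ha]
      by_cases hb : b = w2
      · subst hb
        have := aux_le_sum_ind (B b) w1 a ha hB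
        linarith
      · have := aux_le_sum_ind A w2 b hb hA
        linarith
  · refine ⟨⟨0, hM1⟩, fun w1 w2 => ?_⟩
    have n1 := aux_sum_ind_nonneg A (Finset.univ.erase w2)
    have n2 := aux_sum_ind_nonneg (B w2) (Finset.univ.erase w1)
    have p0 : (if (⟨0, hM1⟩ : Fin M1) = w1 then (0:ℝ) else 1) ≤ 1 := by split_ifs <;> norm_num
    have p1 : (1:ℝ) ≤ (if A w2 then 0 else 1) + (if B w2 w1 then 0 else 1) := by
      by_cases hA : A w2
      · have : ¬ B w2 w1 := fun hB => h ⟨(w1, w2), hA, hB⟩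
        simp [hA, this]
      · rw [if_neg hA]; split_ifs <;> norm_num
    linarith

lemma aux_dec2 {M2 : ℕ} (hM2 : 0 < M2) (A : Fin M2 → Prop) [DecidablePred A] :
    ∃ g : Fin M2, ∀ w2, (if g = w2 then (0:ℝ) else 1) ≤
      (if A w2 then 0 else 1)
      + ∑ k ∈ Finset.univ.erase w2, (if A k then (1:ℝ) else 0) := by
  by_cases h : ∃ k, A k
  · obtain ⟨b, hA⟩ := h
    refine ⟨b, fun w2 => ?_⟩
    have n1 := aux_sum_ind_nonneg A (Finset.univ.erase w2)
    have p1 : (0:ℝ) ≤ (if A w2 then 0 else 1) := by split_ifs <;> norm_num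
    by_cases hb : b = w2
    · rw [if_pos hb]; linarith
    · rw [if_neg hb]
      have := aux_le_sum_ind A w2 b hb hA
      linarith
  · refine ⟨⟨0, hM2⟩, fun w2 => ?_⟩
    have n1 := aux_sum_ind_nonneg A (Finset.univ.erase w2)
    have : ¬ A w2 := fun hA => h ⟨w2, hA⟩
    rw [if_neg this]
    have p0 : (if (⟨0, hM2⟩ : Fin M2) = w2 then (0:ℝ) else 1) ≤ 1 := by split_ifs <;> norm_num
    linarith

lemma aux_oneshot {V X Y1 Y2 : Type*} [Fintype V] [Fintype X] [Fintype Y1] [Fintype Y2]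
    (P : V → ℝ) (Q : V → X → ℝ) (K : V → X → Y1 → Y2 → ℝ)
    (hP : ∀ v, 0 ≤ P v) (hP1 : ∑ v, P v = 1)
    (hQ : ∀ v x, 0 ≤ Q v x) (hQ1 : ∀ v, ∑ x, Q v x = 1)
    (hK : ∀ v x y1 y2, 0 ≤ K v x y1 y2) (hK1 : ∀ v x, ∑ y1, ∑ y2, K v x y1 y2 = 1)
    (KA : V → X → Y1 → ℝ) (hKA : ∀ v x y1, KA v x y1 = ∑ y2, K v x y1 y2)
    (KB : V → X → Y2 → ℝ) (hKB : ∀ v x y2, KB v x y2 = ∑ y1, K v x y1 y2)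
    (WA : V → Y1 → ℝ) (hWA : ∀ v z, WA v z = ∑ x, Q v x * KA v x z)
    (WB : V → Y2 → ℝ) (hWB : ∀ v z, WB v z = ∑ x, Q v x * KB v x z)
    (PA : Y1 → ℝ) (hPA : ∀ z, PA z = ∑ v, P v * WA v z)
    (PB : Y2 → ℝ) (hPB : ∀ z, PB z = ∑ v, P v * WB v z)
    (cA cX cB : ℝ) (hcA : 0 < cA) (hcX : 0 < cX) (hcB : 0 < cB)
    (M1 M2 : ℕ) (hM1 : 0 < M1) (hM2 : 0 < M2) :
    ∃ (v : Fin M2 → V) (x : Fin M1 → Fin M2 → X) (g1 : Y1 → Fin M1) (g2 : Y2 → Fin M2),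
     (1 / (M1 * M2) : ℝ) * (∑ w1 : Fin M1, ∑ w2 : Fin M2,
      ∑ y1, ∑ y2, K (v w2) (x w1 w2) y1 y2 * (if g1 y1 = w1 then 0 else 1))
     + (1 / (M1 * M2) : ℝ) * (∑ w1 : Fin M1, ∑ w2 : Fin M2,
      ∑ y1, ∑ y2, K (v w2) (x w1 w2) y1 y2 * (if g2 y2 = w2 then 0 else 1))
    ≤ ∑ v, ∑ x, ∑ y1, ∑ y2, P v * Q v x * K v x y1 y2 *
        ((if cA * PA y1 ≤ WA v y1 then 0 else 1) + (if cX * WA v y1 ≤ KA v x y1 then 0 else 1)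
          + (if cB * PB y2 ≤ WB v y2 then 0 else 1))
      + ((M2:ℝ) - 1) * (1 / cA + 1 / cB) + ((M1:ℝ) - 1) * (1 / cX) := by
  obtain ⟨v, x, hvx⟩ := aux_exists_code P Q (fun v x (y : Y1 × Y2) => K v x y.1 y.2) hP hP1 hQ hQ1
    (fun v x y => ((if cA * PA y.1 ≤ WA v y.1 then 0 else 1)
          + (if cX * WA v y.1 ≤ KA v x y.1 then 0 else 1)
          + (if cB * PB y.2 ≤ WB v y.2 then 0 else 1)))
    (fun v y => (if cA * PA y.1 ≤ WA v y.1 then 1 else 0)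
          + (if cB * PB y.2 ≤ WB v y.2 then 1 else 0))
    (fun v x y => (if cX * WA v y.1 ≤ KA v x y.1 then 1 else 0)) M1 M2 hM1 hM2
  have hd1 := fun y1 => aux_dec1 hM1 (fun k => cA * PA y1 ≤ WA (v k) y1)
    (fun k l => cX * WA (v k) y1 ≤ KA (v k) (x l k) y1)
  have hd2 := fun y2 => aux_dec2 hM2 (fun k => cB * PB y2 ≤ WB (v k) y2)
  choose g1 hg1 using hd1
  choose g2 hg2 using hd2
  refine ⟨v, x, g1, g2, ?_⟩
  have hM1' : (0:ℝ) ≤ (M1:ℝ) - 1 := by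
    have : (1:ℝ) ≤ M1 := by exact_mod_cast hM1
    linarith
  have hM2' : (0:ℝ) ≤ (M2:ℝ) - 1 := by
    have : (1:ℝ) ≤ M2 := by exact_mod_cast hM2
    linarith
  refine le_trans ?_ (hvx.trans ?_)
  · rw [← mul_add]
    refine mul_le_mul_of_nonneg_left ?_ (by positivity)
    rw [← Finset.sum_add_distrib]
    refine Finset.sum_le_sum fun w1 _ => ?_
    rw [← Finset.sum_add_distrib]
    refine Finset.sum_le_sum fun w2 _ => ?_
    rw [Fintype.sum_prod_type, ← Finset.sum_add_distrib]
    refine Finset.sum_le_sum fun y1 _ => ?_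
    rw [← Finset.sum_add_distrib]
    refine Finset.sum_le_sum fun y2 _ => ?_
    rw [← mul_add]
    refine mul_le_mul_of_nonneg_left ?_ (hK _ _ _ _)
    have h1 := hg1 y1 w1 w2
    have h2 := hg2 y2 w2
    rw [Finset.sum_add_distrib]
    linarith
  · have hKAn : ∀ v x z, 0 ≤ KA v x z := fun v x z => by
      rw [hKA]; exact Finset.sum_nonneg fun _ _ => hK _ _ _ _
    have hKBn : ∀ v x z, 0 ≤ KB v x z := fun v x z => by
      rw [hKB]; exact Finset.sum_nonneg fun _ _ => hK _ _ _ _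
    have hKA1 : ∀ v x, ∑ z, KA v x z = 1 := fun v x => by simp only [hKA, hK1]
    have hKB1 : ∀ v x, ∑ z, KB v x z = 1 := fun v x => by
      simp only [hKB]; rw [Finset.sum_comm]; exact hK1 v x
    have cA1 := aux_change1 P Q KA hP hP1 hQ1 hKA1 hQ hKAn WA hWA PA hPA cA hcA
    have cB1 := aux_change1 P Q KB hP hP1 hQ1 hKB1 hQ hKBn WB hWB PB hPB cB hcB
    have cX1 := aux_change2 P Q KA hP hP1 hQ1 hKA1 hQ hKAn WA hWA cX hcX
    have sA : ∀ v x (f : Y1 → ℝ), ∑ y : Y1 × Y2, K v x y.1 y.2 * f y.1 = ∑ z, KA v x z * f z := by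
      intro v x f
      rw [Fintype.sum_prod_type]
      simp only [hKA, Finset.sum_mul]
    have sB : ∀ v x (f : Y2 → ℝ), ∑ y : Y1 × Y2, K v x y.1 y.2 * f y.2 = ∑ z, KB v x z * f z := by
      intro v x f
      rw [Fintype.sum_prod_type_right]
      simp only [hKB, Finset.sum_mul]
    refine add_le_add (add_le_add (le_of_eq ?_) (mul_le_mul_of_nonneg_left ?_ hM2'))
      (mul_le_mul_of_nonneg_left ?_ hM1')
    · refine Finset.sum_congr rfl fun v _ => Finset.sum_congr rfl fun x _ => ?_
      rw [Fintype.sum_prod_type]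
      simp only [Finset.mul_sum, mul_assoc]
    · refine le_trans (le_of_eq ?_) (add_le_add cA1 cB1)
      rw [← Finset.sum_add_distrib]
      refine Finset.sum_congr rfl fun v _ => ?_
      rw [← Finset.sum_add_distrib]
      refine Finset.sum_congr rfl fun x _ => ?_
      rw [← mul_add, ← Finset.sum_add_distrib]
      congr 1
      refine Finset.sum_congr rfl fun v' _ => ?_
      rw [← mul_add]
      congr 1
      rw [← sA v x (fun z => if cA * PA z ≤ WA v' z then 1 else 0),
        ← sB v x (fun z => if cB * PB z ≤ WB v' z then 1 else 0), ← Finset.sum_add_distrib]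
      simp only [mul_add]
    · refine le_trans (le_of_eq ?_) cX1
      refine Finset.sum_congr rfl fun v _ => ?_
      congr 1
      refine Finset.sum_congr rfl fun x _ => Finset.sum_congr rfl fun x' _ => ?_
      rw [← sA v x (fun z => if cX * WA v z ≤ KA v x' z then 1 else 0)]

lemma aux_sum_arrow_prod {n : ℕ} {A B : Type*} [Fintype A] [Fintype B] (F : (Fin n → A × B) → ℝ) :
    ∑ w, F w = ∑ a : Fin n → A, ∑ b : Fin n → B, F (fun i => (a i, b i)) := by
  rw [← Fintype.sum_prod_type (f := fun ab : (Fin n → A) × (Fin n → B) =>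
    F (fun i => (ab.1 i, ab.2 i)))]
  exact Fintype.sum_equiv (Equiv.arrowProdEquivProdArrow (Fin n) (fun _ => A) (fun _ => B)) _ _ (fun w => rfl)

lemma aux_block {V X Y1 Y2 : Type*} [Fintype V] [Fintype X] [Fintype Y1] [Fintype Y2]
    (P : V → ℝ) (Q : V → X → ℝ) (K : V → X → Y1 → Y2 → ℝ)
    (hP : ∀ v, 0 ≤ P v) (hP1 : ∑ v, P v = 1)
    (hQ : ∀ v x, 0 ≤ Q v x) (hQ1 : ∀ v, ∑ x, Q v x = 1)
    (hK : ∀ v x y1 y2, 0 ≤ K v x y1 y2) (hK1 : ∀ v x, ∑ y1, ∑ y2, K v x y1 y2 = 1)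
    (KA : V → X → Y1 → ℝ) (hKA : ∀ v x y1, KA v x y1 = ∑ y2, K v x y1 y2)
    (KB : V → X → Y2 → ℝ) (hKB : ∀ v x y2, KB v x y2 = ∑ y1, K v x y1 y2)
    (WA : V → Y1 → ℝ) (hWA : ∀ v z, WA v z = ∑ x, Q v x * KA v x z)
    (WB : V → Y2 → ℝ) (hWB : ∀ v z, WB v z = ∑ x, Q v x * KB v x z)
    (PA : Y1 → ℝ) (hPA : ∀ z, PA z = ∑ v, P v * WA v z)
    (PB : Y2 → ℝ) (hPB : ∀ z, PB z = ∑ v, P v * WB v z)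
    (hpos : ∀ v x y1 y2, 0 < P v * Q v x * K v x y1 y2 →
      0 < KA v x y1 ∧ 0 < WA v y1 ∧ 0 < WB v y2 ∧ 0 < PA y1 ∧ 0 < PB y2)
    (IA IX IB : ℝ)
    (hIA : IA = ∑ w : V × X × Y1 × Y2, P w.1 * Q w.1 w.2.1 * K w.1 w.2.1 w.2.2.1 w.2.2.2 *
      Real.logb 2 (WA w.1 w.2.2.1 / PA w.2.2.1))
    (hIX : IX = ∑ w : V × X × Y1 × Y2, P w.1 * Q w.1 w.2.1 * K w.1 w.2.1 w.2.2.1 w.2.2.2 *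
      Real.logb 2 (KA w.1 w.2.1 w.2.2.1 / WA w.1 w.2.2.1))
    (hIB : IB = ∑ w : V × X × Y1 × Y2, P w.1 * Q w.1 w.2.1 * K w.1 w.2.1 w.2.2.1 w.2.2.2 *
      Real.logb 2 (WB w.1 w.2.2.2 / PB w.2.2.2))
    (hBA : IB ≤ IA) (ε : ℝ) (hε : 0 < ε) :
    ∃ (n M1 M2 : ℕ) (v : Fin M2 → Fin n → V) (x : Fin M1 → Fin M2 → Fin n → X)
      (g1 : (Fin n → Y1) → Fin M1) (g2 : (Fin n → Y2) → Fin M2),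
      0 < n ∧ 0 < M1 ∧ 0 < M2 ∧
      IX - ε ≤ Real.logb 2 M1 / n ∧ IB - ε ≤ Real.logb 2 M2 / n ∧
     (1 / (M1 * M2) : ℝ) * (∑ w1 : Fin M1, ∑ w2 : Fin M2,
      ∑ y1 : Fin n → Y1, ∑ y2 : Fin n → Y2,
        (∏ i, K (v w2 i) (x w1 w2 i) (y1 i) (y2 i)) * (if g1 y1 = w1 then 0 else 1))
     + (1 / (M1 * M2) : ℝ) * (∑ w1 : Fin M1, ∑ w2 : Fin M2,
      ∑ y1 : Fin n → Y1, ∑ y2 : Fin n → Y2,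
        (∏ i, K (v w2 i) (x w1 w2 i) (y1 i) (y2 i)) * (if g2 y2 = w2 then 0 else 1))
    ≤ ε := by
  set μ : V × X × Y1 × Y2 → ℝ := fun w => P w.1 * Q w.1 w.2.1 * K w.1 w.2.1 w.2.2.1 w.2.2.2 with hμd
  have hμ : ∀ w, 0 ≤ μ w := fun w => mul_nonneg (mul_nonneg (hP _) (hQ _ _)) (hK _ _ _ _)
  have hμ1 : ∑ w, μ w = 1 := by
    simp only [hμd, Fintype.sum_prod_type, ← Finset.mul_sum, hK1, mul_one, hQ1, hP1]
  obtain ⟨SA, hSA0, hSA⟩ := aux_wlln μ hμ hμ1 (fun w => WA w.1 w.2.2.1) (fun w => PA w.2.2.1)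
    (fun w hw => (hpos _ _ _ _ hw).2.1) (fun w hw => (hpos _ _ _ _ hw).2.2.2.1) IA hIA
  obtain ⟨SX, hSX0, hSX⟩ := aux_wlln μ hμ hμ1 (fun w => KA w.1 w.2.1 w.2.2.1)
    (fun w => WA w.1 w.2.2.1)
    (fun w hw => (hpos _ _ _ _ hw).1) (fun w hw => (hpos _ _ _ _ hw).2.1) IX hIX
  obtain ⟨SB, hSB0, hSB⟩ := aux_wlln μ hμ hμ1 (fun w => WB w.1 w.2.2.2) (fun w => PB w.2.2.2)
    (fun w hw => (hpos _ _ _ _ hw).2.2.1) (fun w hw => (hpos _ _ _ _ hw).2.2.2.2) IB hIB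
  -- choose n
  have hlim : Filter.Tendsto (fun n : ℕ => (SA + SX + SB) / (ε / 2) ^ 2 / (n : ℝ)
      + 3 * ((2:ℝ) ^ (-(ε / 2))) ^ n) Filter.atTop (nhds (0 + 3 * 0)) := by
    refine Filter.Tendsto.add (tendsto_const_div_atTop_nhds_zero_nat _) ?_
    refine Filter.Tendsto.const_mul _ (tendsto_pow_atTop_nhds_zero_of_lt_one (by positivity) ?_)
    exact Real.rpow_lt_one_of_one_lt_of_neg (by norm_num) (by linarith)
  have hev := (hlim.eventually (gt_mem_nhds (show (0:ℝ) + 3 * 0 < ε by linarith))).and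
    (Filter.eventually_gt_atTop 0)
  obtain ⟨n, hnε, hn⟩ := hev.exists
  have hn' : (0:ℝ) < n := by exact_mod_cast hn
  set t : ℝ := (2:ℝ) ^ (-(ε / 2) * n) with ht
  have htn : ((2:ℝ) ^ (-(ε / 2))) ^ n = t := by
    rw [ht, Real.rpow_mul (by norm_num), Real.rpow_natCast]
  rw [htn] at hnε
  set M1 := ⌈(2:ℝ) ^ ((n:ℝ) * (IX - ε))⌉₊ with hM1
  set M2 := ⌈(2:ℝ) ^ ((n:ℝ) * (IB - ε))⌉₊ with hM2
  have hM1p : 0 < M1 := Nat.ceil_pos.2 (by positivity)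
  have hM2p : 0 < M2 := Nat.ceil_pos.2 (by positivity)
  have hM1u : (M1:ℝ) - 1 ≤ (2:ℝ) ^ ((n:ℝ) * (IX - ε)) := by
    have := Nat.ceil_lt_add_one (a := (2:ℝ) ^ ((n:ℝ) * (IX - ε))) (by positivity)
    linarith
  have hM2u : (M2:ℝ) - 1 ≤ (2:ℝ) ^ ((n:ℝ) * (IB - ε)) := by
    have := Nat.ceil_lt_add_one (a := (2:ℝ) ^ ((n:ℝ) * (IB - ε))) (by positivity)
    linarith
  have hrate : ∀ J : ℝ, J ≤ Real.logb 2 (⌈(2:ℝ) ^ ((n:ℝ) * J)⌉₊ : ℝ) / n := by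
    intro J
    rw [le_div_iff₀ hn', Real.le_logb_iff_rpow_le (by norm_num)
      (by exact_mod_cast Nat.ceil_pos.2 (by positivity)), mul_comm]
    exact Nat.le_ceil _
  have hratio : ∀ J J' : ℝ, J ≤ J' →
      (2:ℝ) ^ ((n:ℝ) * (J - ε)) * (1 / (2:ℝ) ^ ((n:ℝ) * (J' - ε / 2))) ≤ t := by
    intro J J' hJ
    rw [mul_one_div, ← Real.rpow_sub (by norm_num), ht]
    refine Real.rpow_le_rpow_of_exponent_le (by norm_num) ?_
    nlinarith
  obtain ⟨v, x, g1, g2, hcode⟩ := aux_oneshot (V := Fin n → V) (X := Fin n → X)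
    (Y1 := Fin n → Y1) (Y2 := Fin n → Y2)
    (fun v => ∏ i, P (v i)) (fun v x => ∏ i, Q (v i) (x i))
    (fun v x y1 y2 => ∏ i, K (v i) (x i) (y1 i) (y2 i))
    (fun v => Finset.prod_nonneg fun i _ => hP _) (aux_sum_prod_one (fun _ => P) fun _ => hP1)
    (fun v x => Finset.prod_nonneg fun i _ => hQ _ _)
    (fun v => aux_sum_prod_one (fun i => Q (v i)) fun _ => hQ1 _)
    (fun v x y1 y2 => Finset.prod_nonneg fun i _ => hK _ _ _ _)
    (fun v x => by
      have : ∀ y1 : Fin n → Y1, ∑ y2 : Fin n → Y2, ∏ i, K (v i) (x i) (y1 i) (y2 i)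
        = ∏ i, ∑ y2, K (v i) (x i) (y1 i) y2 := fun y1 =>
          aux_prodSum (fun i y => K (v i) (x i) (y1 i) y)
      simp only [this]
      exact aux_sum_prod_one (fun i y1 => ∑ y2, K (v i) (x i) y1 y2) fun i => hK1 _ _)
    (fun v x y1 => ∏ i, KA (v i) (x i) (y1 i))
    (fun v x y1 => by
      simp only [hKA]; exact (aux_prodSum (fun i y => K (v i) (x i) (y1 i) y)).symm)
    (fun v x y2 => ∏ i, KB (v i) (x i) (y2 i))
    (fun v x y2 => by
      simp only [hKB]; exact (aux_prodSum (fun i y => K (v i) (x i) y (y2 i))).symm)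
    (fun v z => ∏ i, WA (v i) (z i))
    (fun v z => by
      simp only [hWA, ← Finset.prod_mul_distrib]
      exact (aux_prodSum (fun i x => Q (v i) x * KA (v i) x (z i))).symm)
    (fun v z => ∏ i, WB (v i) (z i))
    (fun v z => by
      simp only [hWB, ← Finset.prod_mul_distrib]
      exact (aux_prodSum (fun i x => Q (v i) x * KB (v i) x (z i))).symm)
    (fun z => ∏ i, PA (z i))
    (fun z => by
      simp only [hPA, ← Finset.prod_mul_distrib]
      exact (aux_prodSum (fun i v => P v * WA v (z i))).symm)
    (fun z => ∏ i, PB (z i))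
    (fun z => by
      simp only [hPB, ← Finset.prod_mul_distrib]
      exact (aux_prodSum (fun i v => P v * WB v (z i))).symm)
    ((2:ℝ) ^ ((n:ℝ) * (IA - ε / 2))) ((2:ℝ) ^ ((n:ℝ) * (IX - ε / 2)))
    ((2:ℝ) ^ ((n:ℝ) * (IB - ε / 2))) (by positivity) (by positivity) (by positivity)
    M1 M2 hM1p hM2p
  refine ⟨n, M1, M2, v, x, g1, g2, hn, hM1p, hM2p, hrate _, hrate _, hcode.trans ?_⟩
  have hA := hSA n (ε / 2) hn (by positivity)
  have hX := hSX n (ε / 2) hn (by positivity)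
  have hB := hSB n (ε / 2) hn (by positivity)
  have hA2 : ((M2:ℝ) - 1) * (1 / (2:ℝ) ^ ((n:ℝ) * (IA - ε / 2))) ≤ t :=
    (mul_le_mul_of_nonneg_right hM2u (by positivity)).trans (hratio _ _ hBA)
  have hB2 : ((M2:ℝ) - 1) * (1 / (2:ℝ) ^ ((n:ℝ) * (IB - ε / 2))) ≤ t :=
    (mul_le_mul_of_nonneg_right hM2u (by positivity)).trans (hratio _ _ le_rfl)
  have hX2 : ((M1:ℝ) - 1) * (1 / (2:ℝ) ^ ((n:ℝ) * (IX - ε / 2))) ≤ t :=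
    (mul_le_mul_of_nonneg_right hM1u (by positivity)).trans (hratio _ _ le_rfl)
  have hsum : ∀ f1 f2 f3 : (Fin n → V) → (Fin n → X) → (Fin n → Y1) → (Fin n → Y2) → ℝ,
      ∑ v : Fin n → V, ∑ x : Fin n → X, ∑ y1 : Fin n → Y1, ∑ y2 : Fin n → Y2,
        (∏ i, P (v i)) * (∏ i, Q (v i) (x i)) * (∏ i, K (v i) (x i) (y1 i) (y2 i)) *
          (f1 v x y1 y2 + f2 v x y1 y2 + f3 v x y1 y2)
      = ∑ w : Fin n → V × X × Y1 × Y2, (∏ i, μ (w i)) *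
          f1 (fun i => (w i).1) (fun i => (w i).2.1) (fun i => (w i).2.2.1) (fun i => (w i).2.2.2)
        + ∑ w : Fin n → V × X × Y1 × Y2, (∏ i, μ (w i)) *
          f2 (fun i => (w i).1) (fun i => (w i).2.1) (fun i => (w i).2.2.1) (fun i => (w i).2.2.2)
        + ∑ w : Fin n → V × X × Y1 × Y2, (∏ i, μ (w i)) *
          f3 (fun i => (w i).1) (fun i => (w i).2.1) (fun i => (w i).2.2.1) (fun i => (w i).2.2.2)
      := by
    intro f1 f2 f3
    rw [← Finset.sum_add_distrib, ← Finset.sum_add_distrib]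
    simp only [← mul_add]
    simp only [aux_sum_arrow_prod, hμd, Finset.prod_mul_distrib]
  rw [hsum (fun v x y1 y2 => if (2:ℝ) ^ ((n:ℝ) * (IA - ε / 2)) * (∏ i, PA (y1 i))
      ≤ ∏ i, WA (v i) (y1 i) then 0 else 1)
    (fun v x y1 y2 => if (2:ℝ) ^ ((n:ℝ) * (IX - ε / 2)) * (∏ i, WA (v i) (y1 i))
      ≤ ∏ i, KA (v i) (x i) (y1 i) then 0 else 1)
    (fun v x y1 y2 => if (2:ℝ) ^ ((n:ℝ) * (IB - ε / 2)) * (∏ i, PB (y2 i))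
      ≤ ∏ i, WB (v i) (y2 i) then 0 else 1)]
  have hfin : SA / (n * (ε / 2) ^ 2) + SX / (n * (ε / 2) ^ 2) + SB / (n * (ε / 2) ^ 2)
      = (SA + SX + SB) / (ε / 2) ^ 2 / (n : ℝ) := by field_simp
  rw [mul_add ((M2:ℝ) - 1)]
  linarith

lemma aux_entRV {Ω A : Type*} [Fintype Ω] [Fintype A] [DecidableEq A] (μ : Ω → ℝ) (f : Ω → A) :
    entRV μ f = -∑ ω, μ ω * Real.logb 2 (lawOf μ f (f ω)) := by
  unfold entRV ent
  congr 1
  have : ∀ a, lawOf μ f a * Real.logb 2 (lawOf μ f a)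
      = ∑ ω, if f ω = a then μ ω * Real.logb 2 (lawOf μ f (f ω)) else 0 := by
    intro a
    conv_lhs => lhs; unfold lawOf
    rw [Finset.sum_mul]
    refine Finset.sum_congr rfl fun ω _ => ?_
    split_ifs with h
    · rw [h]
    · simp
  simp only [this]
  rw [Finset.sum_comm]
  simp

lemma aux_single_pos {A : Type*} [Fintype A] (f : A → ℝ) (hf : ∀ a, 0 ≤ f a) (a : A)
    (ha : 0 < f a) : 0 < ∑ a, f a :=
  Finset.sum_pos' (fun i _ => hf i) ⟨a, Finset.mem_univ a, ha⟩

lemma aux_law_v (ch : DMIFC X1 X2 Y1 Y2) (nU : ℕ)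
    (p : Fin nU → X2 → ℝ) (q : Fin nU → X1 → ℝ) (hq1 : ∀ u, ∑ x1, q u x1 = 1) (u : Fin nU) (x2 : X2) :
    lawOf (jointStar ch nU p q) (fun p => (p.1, p.2.2.1)) (u, x2) = p u x2 := by
  simp [lawOf, jointStar, Fintype.sum_prod_type, ite_and, Finset.sum_ite_irrel, ← Finset.mul_sum,
    ch.sum_one, hq1]

lemma aux_law_xv (ch : DMIFC X1 X2 Y1 Y2) (nU : ℕ)
    (p : Fin nU → X2 → ℝ) (q : Fin nU → X1 → ℝ) (u : Fin nU) (x1 : X1) (x2 : X2) :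
    lawOf (jointStar ch nU p q) (fun p => (p.2.1, (p.1, p.2.2.1))) (x1, (u, x2))
      = p u x2 * q u x1 := by
  simp [lawOf, jointStar, Fintype.sum_prod_type, ite_and, Finset.sum_ite_irrel, ← Finset.mul_sum,
    ch.sum_one]

lemma aux_law_xyv (ch : DMIFC X1 X2 Y1 Y2) (nU : ℕ)
    (p : Fin nU → X2 → ℝ) (q : Fin nU → X1 → ℝ) (u : Fin nU) (x1 : X1) (x2 : X2) (y1 : Y1) :
    lawOf (jointStar ch nU p q) (fun p => (p.2.1, p.2.2.2.1, (p.1, p.2.2.1))) (x1, y1, (u, x2))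
      = p u x2 * q u x1 * ∑ y2, ch.W x1 x2 y1 y2 := by
  simp [lawOf, jointStar, Fintype.sum_prod_type, ite_and, Finset.sum_ite_irrel, ← Finset.mul_sum]

lemma aux_law_yv (ch : DMIFC X1 X2 Y1 Y2) (nU : ℕ)
    (p : Fin nU → X2 → ℝ) (q : Fin nU → X1 → ℝ) (u : Fin nU) (x2 : X2) (y1 : Y1) :
    lawOf (jointStar ch nU p q) (fun p => (p.2.2.2.1, (p.1, p.2.2.1))) (y1, (u, x2))
      = p u x2 * ∑ x1, q u x1 * ∑ y2, ch.W x1 x2 y1 y2 := by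
  simp [lawOf, jointStar, Fintype.sum_prod_type, ite_and, Finset.sum_ite_irrel, ← Finset.mul_sum,
    mul_assoc]

lemma aux_law_vy (ch : DMIFC X1 X2 Y1 Y2) (nU : ℕ)
    (p : Fin nU → X2 → ℝ) (q : Fin nU → X1 → ℝ) (u : Fin nU) (x2 : X2) (y1 : Y1) :
    lawOf (jointStar ch nU p q) (fun p => ((p.1, p.2.2.1), p.2.2.2.1)) ((u, x2), y1)
      = p u x2 * ∑ x1, q u x1 * ∑ y2, ch.W x1 x2 y1 y2 := by
  simp [lawOf, jointStar, Fintype.sum_prod_type, ite_and, Finset.sum_ite_irrel, ← Finset.mul_sum,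
    mul_assoc]

lemma aux_law_vy2 (ch : DMIFC X1 X2 Y1 Y2) (nU : ℕ)
    (p : Fin nU → X2 → ℝ) (q : Fin nU → X1 → ℝ) (u : Fin nU) (x2 : X2) (y2 : Y2) :
    lawOf (jointStar ch nU p q) (fun p => ((p.1, p.2.2.1), p.2.2.2.2)) ((u, x2), y2)
      = p u x2 * ∑ x1, q u x1 * ∑ y1, ch.W x1 x2 y1 y2 := by
  simp [lawOf, jointStar, Fintype.sum_prod_type, ite_and, Finset.sum_ite_irrel, ← Finset.mul_sum,
    mul_assoc]

lemma aux_law_y (ch : DMIFC X1 X2 Y1 Y2) (nU : ℕ)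
    (p : Fin nU → X2 → ℝ) (q : Fin nU → X1 → ℝ) (y1 : Y1) :
    lawOf (jointStar ch nU p q) (fun p => p.2.2.2.1) y1
      = ∑ v : Fin nU × X2, p v.1 v.2 * ∑ x1, q v.1 x1 * ∑ y2, ch.W x1 v.2 y1 y2 := by
  simp [lawOf, jointStar, Fintype.sum_prod_type, Finset.sum_ite_irrel, Finset.mul_sum, mul_assoc]
  exact Finset.sum_congr rfl fun _ _ => Finset.sum_comm

lemma aux_law_y2 (ch : DMIFC X1 X2 Y1 Y2) (nU : ℕ)
    (p : Fin nU → X2 → ℝ) (q : Fin nU → X1 → ℝ) (y2 : Y2) :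
    lawOf (jointStar ch nU p q) (fun p => p.2.2.2.2) y2
      = ∑ v : Fin nU × X2, p v.1 v.2 * ∑ x1, q v.1 x1 * ∑ y1, ch.W x1 v.2 y1 y2 := by
  simp [lawOf, jointStar, Fintype.sum_prod_type, Finset.mul_sum, mul_assoc]
  exact Finset.sum_congr rfl fun _ _ => Finset.sum_comm

lemma aux_pos (ch : DMIFC X1 X2 Y1 Y2) (nU : ℕ)
    (p : Fin nU → X2 → ℝ) (q : Fin nU → X1 → ℝ) (hp : ∀ u x, 0 ≤ p u x) (hq : ∀ u x, 0 ≤ q u x)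
    (v : Fin nU × X2) (x : X1) (y1 : Y1) (y2 : Y2)
    (h : 0 < p v.1 v.2 * q v.1 x * ch.W x v.2 y1 y2) :
    0 < p v.1 v.2 ∧ 0 < q v.1 x ∧
    0 < ∑ y2, ch.W x v.2 y1 y2 ∧ 0 < ∑ x1, q v.1 x1 * ∑ y2, ch.W x1 v.2 y1 y2 ∧
    0 < ∑ x1, q v.1 x1 * ∑ y1, ch.W x1 v.2 y1 y2 ∧
    0 < ∑ v : Fin nU × X2, p v.1 v.2 * ∑ x1, q v.1 x1 * ∑ y2, ch.W x1 v.2 y1 y2 ∧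
    0 < ∑ v : Fin nU × X2, p v.1 v.2 * ∑ x1, q v.1 x1 * ∑ y1, ch.W x1 v.2 y1 y2 := by
  have hp' : 0 < p v.1 v.2 := lt_of_le_of_ne (hp _ _) fun h0 => by simp [← h0] at h
  have hq' : 0 < q v.1 x := lt_of_le_of_ne (hq _ _) fun h0 => by simp [← h0] at h
  have hW' : 0 < ch.W x v.2 y1 y2 := lt_of_le_of_ne (ch.nonneg _ _ _ _) fun h0 => by
    simp [← h0] at h
  have nA : ∀ x1 x2 y1, 0 ≤ ∑ y2, ch.W x1 x2 y1 y2 := fun _ _ _ =>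
    Finset.sum_nonneg fun _ _ => ch.nonneg _ _ _ _
  have nB : ∀ x1 x2 y2, 0 ≤ ∑ y1, ch.W x1 x2 y1 y2 := fun _ _ _ =>
    Finset.sum_nonneg fun _ _ => ch.nonneg _ _ _ _
  have kA : 0 < ∑ y2, ch.W x v.2 y1 y2 := aux_single_pos _ (fun _ => ch.nonneg _ _ _ _) y2 hW'
  have kB : 0 < ∑ y1, ch.W x v.2 y1 y2 :=
    aux_single_pos (fun y1 => ch.W x v.2 y1 y2) (fun _ => ch.nonneg _ _ _ _) y1 hW'
  have wA : 0 < ∑ x1, q v.1 x1 * ∑ y2, ch.W x1 v.2 y1 y2 :=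
    aux_single_pos _ (fun _ => mul_nonneg (hq _ _) (nA _ _ _)) x (mul_pos hq' kA)
  have wB : 0 < ∑ x1, q v.1 x1 * ∑ y1, ch.W x1 v.2 y1 y2 :=
    aux_single_pos _ (fun _ => mul_nonneg (hq _ _) (nB _ _ _)) x (mul_pos hq' kB)
  refine ⟨hp', hq', kA, wA, wB, ?_, ?_⟩
  · exact aux_single_pos (fun v : Fin nU × X2 => p v.1 v.2 * ∑ x1, q v.1 x1 * ∑ y2, ch.W x1 v.2 y1 y2)
      (fun _ => mul_nonneg (hp _ _) (Finset.sum_nonneg fun _ _ => mul_nonneg (hq _ _) (nA _ _ _)))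
      v (mul_pos hp' wA)
  · exact aux_single_pos (fun v : Fin nU × X2 => p v.1 v.2 * ∑ x1, q v.1 x1 * ∑ y1, ch.W x1 v.2 y1 y2)
      (fun _ => mul_nonneg (hp _ _) (Finset.sum_nonneg fun _ _ => mul_nonneg (hq _ _) (nB _ _ _)))
      v (mul_pos hp' wB)

/-- reordering of the coordinates -/
def auxEquiv (A B C D E : Type) : A × B × C × D × E ≃ (A × C) × B × D × E where
  toFun w := ((w.1, w.2.2.1), w.2.1, w.2.2.2.1, w.2.2.2.2)
  invFun w := (w.1.1, w.2.1, w.1.2, w.2.2.1, w.2.2.2)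
  left_inv _ := rfl
  right_inv _ := rfl

lemma aux_IA (ch : DMIFC X1 X2 Y1 Y2) (nU : ℕ)
    (p : Fin nU → X2 → ℝ) (q : Fin nU → X1 → ℝ) (hp : ∀ u x, 0 ≤ p u x) (hq : ∀ u x, 0 ≤ q u x)
    (hq1 : ∀ u, ∑ x1, q u x1 = 1) :
    miRV (jointStar ch nU p q) (fun p => (p.1, p.2.2.1)) (fun p => p.2.2.2.1)
    = ∑ w : (Fin nU × X2) × X1 × Y1 × Y2,
      p w.1.1 w.1.2 * q w.1.1 w.2.1 * ch.W w.2.1 w.1.2 w.2.2.1 w.2.2.2 *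
      Real.logb 2 ((∑ x1, q w.1.1 x1 * ∑ y2, ch.W x1 w.1.2 w.2.2.1 y2) /
        (∑ v : Fin nU × X2, p v.1 v.2 * ∑ x1, q v.1 x1 * ∑ y2, ch.W x1 v.2 w.2.2.1 y2)) := by
  rw [← Equiv.sum_comp (auxEquiv (Fin nU) X1 X2 Y1 Y2)]
  unfold miRV
  simp only [aux_entRV, aux_law_v ch nU p q hq1, aux_law_vy, aux_law_y]
  rw [← Finset.sum_neg_distrib, ← Finset.sum_neg_distrib, ← Finset.sum_neg_distrib,
    ← Finset.sum_add_distrib, ← Finset.sum_sub_distrib]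
  refine Finset.sum_congr rfl fun w _ => ?_
  obtain ⟨u, x1, x2, y1, y2⟩ := w
  simp only [jointStar, auxEquiv, Equiv.coe_fn_mk]
  rcases (mul_nonneg (mul_nonneg (hp u x2) (hq u x1)) (ch.nonneg x1 x2 y1 y2)).eq_or_lt with h | h
  · simp [← h]
  · obtain ⟨h1, h2, h3, h4, h5, h6, h7⟩ := aux_pos ch nU p q hp hq (u, x2) x1 y1 y2 h
    dsimp only at h1 h2 h3 h4 h5 h6 h7
    rw [Real.logb_mul h1.ne' h4.ne', Real.logb_div h4.ne' h6.ne']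
    ring

lemma aux_IB (ch : DMIFC X1 X2 Y1 Y2) (nU : ℕ)
    (p : Fin nU → X2 → ℝ) (q : Fin nU → X1 → ℝ) (hp : ∀ u x, 0 ≤ p u x) (hq : ∀ u x, 0 ≤ q u x)
    (hq1 : ∀ u, ∑ x1, q u x1 = 1) :
    miRV (jointStar ch nU p q) (fun p => (p.1, p.2.2.1)) (fun p => p.2.2.2.2)
    = ∑ w : (Fin nU × X2) × X1 × Y1 × Y2,
      p w.1.1 w.1.2 * q w.1.1 w.2.1 * ch.W w.2.1 w.1.2 w.2.2.1 w.2.2.2 *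
      Real.logb 2 ((∑ x1, q w.1.1 x1 * ∑ y1, ch.W x1 w.1.2 y1 w.2.2.2) /
        (∑ v : Fin nU × X2, p v.1 v.2 * ∑ x1, q v.1 x1 * ∑ y1, ch.W x1 v.2 y1 w.2.2.2)) := by
  rw [← Equiv.sum_comp (auxEquiv (Fin nU) X1 X2 Y1 Y2)]
  unfold miRV
  simp only [aux_entRV, aux_law_v ch nU p q hq1, aux_law_vy2, aux_law_y2]
  rw [← Finset.sum_neg_distrib, ← Finset.sum_neg_distrib, ← Finset.sum_neg_distrib,
    ← Finset.sum_add_distrib, ← Finset.sum_sub_distrib]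
  refine Finset.sum_congr rfl fun w _ => ?_
  obtain ⟨u, x1, x2, y1, y2⟩ := w
  simp only [jointStar, auxEquiv, Equiv.coe_fn_mk]
  rcases (mul_nonneg (mul_nonneg (hp u x2) (hq u x1)) (ch.nonneg x1 x2 y1 y2)).eq_or_lt with h | h
  · simp [← h]
  · obtain ⟨h1, h2, h3, h4, h5, h6, h7⟩ := aux_pos ch nU p q hp hq (u, x2) x1 y1 y2 h
    dsimp only at h1 h2 h3 h4 h5 h6 h7
    rw [Real.logb_mul h1.ne' h5.ne', Real.logb_div h5.ne' h7.ne']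
    ring

lemma aux_IX (ch : DMIFC X1 X2 Y1 Y2) (nU : ℕ)
    (p : Fin nU → X2 → ℝ) (q : Fin nU → X1 → ℝ) (hp : ∀ u x, 0 ≤ p u x) (hq : ∀ u x, 0 ≤ q u x)
    (hq1 : ∀ u, ∑ x1, q u x1 = 1) :
    cmiRV (jointStar ch nU p q) (fun p => p.2.1) (fun p => p.2.2.2.1) (fun p => (p.1, p.2.2.1))
    = ∑ w : (Fin nU × X2) × X1 × Y1 × Y2,
      p w.1.1 w.1.2 * q w.1.1 w.2.1 * ch.W w.2.1 w.1.2 w.2.2.1 w.2.2.2 *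
      Real.logb 2 ((∑ y2, ch.W w.2.1 w.1.2 w.2.2.1 y2) /
        (∑ x1, q w.1.1 x1 * ∑ y2, ch.W x1 w.1.2 w.2.2.1 y2)) := by
  rw [← Equiv.sum_comp (auxEquiv (Fin nU) X1 X2 Y1 Y2)]
  unfold cmiRV
  simp only [aux_entRV, aux_law_v ch nU p q hq1, aux_law_xv, aux_law_yv, aux_law_xyv]
  rw [← Finset.sum_neg_distrib, ← Finset.sum_neg_distrib, ← Finset.sum_neg_distrib,
    ← Finset.sum_neg_distrib,
    ← Finset.sum_add_distrib, ← Finset.sum_sub_distrib, ← Finset.sum_sub_distrib]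
  refine Finset.sum_congr rfl fun w _ => ?_
  obtain ⟨u, x1, x2, y1, y2⟩ := w
  simp only [jointStar, auxEquiv, Equiv.coe_fn_mk]
  rcases (mul_nonneg (mul_nonneg (hp u x2) (hq u x1)) (ch.nonneg x1 x2 y1 y2)).eq_or_lt with h | h
  · simp [← h]
  · obtain ⟨h1, h2, h3, h4, h5, h6, h7⟩ := aux_pos ch nU p q hp hq (u, x2) x1 y1 y2 h
    dsimp only at h1 h2 h3 h4 h5 h6 h7
    rw [Real.logb_mul (mul_pos h1 h2).ne' h3.ne', Real.logb_mul h1.ne' h4.ne',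
      Real.logb_mul h1.ne' h2.ne', Real.logb_div h3.ne' h4.ne']
    ring

/-- **Theorem 3 (achievability for type B weak interference).**  For every two-user
discrete memoryless interference channel with degraded message sets (transmitter 1
informed) with type B weak interference, the region `ℛ_*` is achievable:
`ℛ_* ⊆ C^{T₁}_{IFC}`. -/
theorem Rstar_subset_capacityT1_of_typeB (ch : DMIFC X1 X2 Y1 Y2) (hB : TypeB ch) :
    Rstar ch ⊆ CapacityT1 ch := by
  rintro ⟨R1, R2⟩ ⟨nU, p, q, hp, hp1, hq, hq1, hR1, hR2⟩
  dsimp only at hR1 hR2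
  apply subset_closure
  intro ε hε
  have hBA := hB nU (fun w => p w.1 w.2.2 * q w.1 w.2.1) (fun w => mul_nonneg (hp _ _) (hq _ _)) (by
    simp only [Fintype.sum_prod_type]
    rw [← hp1]
    refine Finset.sum_congr rfl fun u _ => ?_
    rw [Finset.sum_comm]
    simp [← Finset.mul_sum, hq1])
  obtain ⟨n, M1, M2, v, x, g1, g2, hn, hM1, hM2, hr1, hr2, he⟩ := aux_block
    (V := Fin nU × X2) (X := X1) (Y1 := Y1) (Y2 := Y2)
    (fun v => p v.1 v.2) (fun v x => q v.1 x) (fun v x y1 y2 => ch.W x v.2 y1 y2)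
    (fun v => hp _ _) (by rw [Fintype.sum_prod_type]; exact hp1) (fun v x => hq _ _)
    (fun v => hq1 _) (fun v x y1 y2 => ch.nonneg _ _ _ _) (fun v x => ch.sum_one _ _)
    _ (fun _ _ _ => rfl) _ (fun _ _ _ => rfl) _ (fun _ _ => rfl) _ (fun _ _ => rfl)
    _ (fun _ => rfl) _ (fun _ => rfl)
    (fun v x y1 y2 h => (aux_pos ch nU p q hp hq v x y1 y2 h).2.2)
    _ _ _ (aux_IA ch nU p q hp hq hq1) (aux_IX ch nU p q hp hq hq1) (aux_IB ch nU p q hp hq hq1)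
    hBA ε hε
  have n1 : 0 ≤ pe1 ch n M1 M2 x (fun w i => (v w i).2) g1 := by
    unfold pe1
    refine mul_nonneg (by positivity) (Finset.sum_nonneg fun _ _ => Finset.sum_nonneg fun _ _ =>
      Finset.sum_nonneg fun _ _ => Finset.sum_nonneg fun _ _ => mul_nonneg
        (Finset.prod_nonneg fun _ _ => ch.nonneg _ _ _ _) (by split_ifs <;> norm_num))
  have n2 : 0 ≤ pe2 ch n M1 M2 x (fun w i => (v w i).2) g2 := by
    unfold pe2
    refine mul_nonneg (by positivity) (Finset.sum_nonneg fun _ _ => Finset.sum_nonneg fun _ _ =>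
      Finset.sum_nonneg fun _ _ => Finset.sum_nonneg fun _ _ => mul_nonneg
        (Finset.prod_nonneg fun _ _ => ch.nonneg _ _ _ _) (by split_ifs <;> norm_num))
  have he' : pe1 ch n M1 M2 x (fun w i => (v w i).2) g1
      + pe2 ch n M1 M2 x (fun w i => (v w i).2) g2 ≤ ε := he
  refine ⟨n, M1, M2, x, fun w i => (v w i).2, g1, g2, hn, hM1, hM2, ?_, ?_, ?_, ?_⟩
  · dsimp only; linarith
  · dsimp only; linarith
  · linarith
  · linarith
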